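/- Let q be an even prime power. Then the maximum value of k for which a k-arc exists in PG(2, q) is q + 2; that is, every k-arc in PG(2, q) satisfies k ≤ q + 2, and there exists a (q + 2)-arc in PG(2, q). -/

import Mathlib

open Module

/-- Points of the projective space `PG(n, q)` over the field `F` (with `q = |F|`). -/
abbrev PGPoint (F : Type*) [Field F] (n : ℕ) := Projectivization F (Fin (n + 1) → F)

/-- The set of projective points lying in the projective subspace determined by
a linear subspace `W`. -/
def ptsIn {F : Type*} [Field F] {n : ℕ} (W : Submodule F (Fin (n + 1) → F)) :
    Set (PGPoint F n) := {P | P.submodule ≤ W}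

/-- Three points of `PG(n, q)` are collinear if they lie on a common line. -/
def Coll3 {F : Type*} [Field F] {n : ℕ} (P₁ P₂ P₃ : PGPoint F n) : Prop :=
  Module.finrank F ↥(P₁.submodule ⊔ P₂.submodule ⊔ P₃.submodule) ≤ 2

/-- A cap (a plane arc when `n = 2`): a set of points no three of which are collinear. -/
def IsCap {F : Type*} [Field F] {n : ℕ} (K : Set (PGPoint F n)) : Prop :=
  ∀ P₁ ∈ K, ∀ P₂ ∈ K, ∀ P₃ ∈ K, P₁ ≠ P₂ → P₁ ≠ P₃ → P₂ ≠ P₃ → ¬ Coll3 P₁ P₂ P₃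

/-- A complete cap: a cap that is not contained in a cap with one more point. -/
def IsCompleteCap {F : Type*} [Field F] {n : ℕ} (K : Set (PGPoint F n)) : Prop :=
  IsCap K ∧ ∀ P ∉ K, ¬ IsCap (insert P K)

/-- A tangent line of `K`: a line (2-dimensional linear subspace) meeting `K`
in exactly one point. -/
def IsTangent {F : Type*} [Field F] {n : ℕ} (K : Set (PGPoint F n))
    (W : Submodule F (Fin (n + 1) → F)) : Prop :=
  Module.finrank F W = 2 ∧ (ptsIn W ∩ K).ncard = 1

/-! Projecting an arc from one of its points `P` onto the pencil of lines through `P` is injective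
on the remaining points, because each such line holds at most one further point of the arc. As there
are `q + 1` lines through `P`, an arc has at most `q + 2` points. The bound is attained by a conic
together with the point `(0 : 1 : 0)`: with `[u, v] = u₀v₁ - u₁v₀`, three points of the conic
`{(s² : st : t²)}` have determinant `[u, v][u, w][v, w]`, and two of them together with
`(0 : 1 : 0)` have determinant `u₁²v₀² - u₀²v₁²`, which is `[u, v]²` in characteristic two. -/

open scoped LinearAlgebra.Projectivization

section Projection

variable {K V : Type*} [DivisionRing K] [AddCommGroup V] [Module K V]

theorem mkQ_rep_ne_zero {P Q : ℙ K V} (h : Q ≠ P) : P.submodule.mkQ Q.rep ≠ 0 := by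
  rw [Submodule.mkQ_apply, Ne, Submodule.Quotient.mk_eq_zero]
  intro hmem
  refine h (Projectivization.submodule_injective (Submodule.eq_of_le_of_finrank_eq ?_ ?_))
  · rwa [Q.submodule_eq, Submodule.span_singleton_le_iff_mem]
  · rw [Q.finrank_submodule, P.finrank_submodule]

/-- The projection from the point `P`, defined away from `P`. Its target `ℙ K (V ⧸ P.submodule)`
is the space of lines through `P`. -/
noncomputable def projFrom (P : ℙ K V) (Q : {Q : ℙ K V // Q ≠ P}) : ℙ K (V ⧸ P.submodule) :=
  Projectivization.mk K (P.submodule.mkQ Q.1.rep) (mkQ_rep_ne_zero Q.2)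

theorem submodule_projFrom (P : ℙ K V) (Q : {Q : ℙ K V // Q ≠ P}) :
    (projFrom P Q).submodule = Q.1.submodule.map P.submodule.mkQ := by
  rw [projFrom, Projectivization.submodule_mk, Q.1.submodule_eq, Submodule.map_span,
    Set.image_singleton]

theorem sup_submodule_eq_of_projFrom_eq {P : ℙ K V} {Q R : {Q : ℙ K V // Q ≠ P}}
    (h : projFrom P Q = projFrom P R) :
    P.submodule ⊔ Q.1.submodule = P.submodule ⊔ R.1.submodule := by
  rw [← Submodule.comap_map_mkQ, ← Submodule.comap_map_mkQ, ← submodule_projFrom,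
    ← submodule_projFrom, h]

end Projection

section Collinearity

variable {F : Type*} [Field F] {n : ℕ}

theorem coll3_of_sup_submodule_eq {P Q R : PGPoint F n}
    (h : P.submodule ⊔ Q.submodule = P.submodule ⊔ R.submodule) : Coll3 P Q R := by
  have hle : R.submodule ≤ P.submodule ⊔ Q.submodule := h ▸ le_sup_right
  rw [Coll3, sup_eq_left.2 hle]
  calc finrank F ↥(P.submodule ⊔ Q.submodule)
      ≤ finrank F P.submodule + finrank F Q.submodule :=
        Submodule.finrank_add_le_finrank_add_finrank _ _
    _ = 2 := by rw [P.finrank_submodule, Q.finrank_submodule]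

theorem coll3_swap_left {P Q R : PGPoint F n} : Coll3 Q P R ↔ Coll3 P Q R := by
  rw [Coll3, Coll3, sup_comm Q.submodule]

theorem coll3_rotate {P Q R : PGPoint F n} : Coll3 Q R P ↔ Coll3 P Q R := by
  rw [Coll3, Coll3, sup_comm (Q.submodule ⊔ R.submodule), sup_assoc]

theorem coll3_mk_iff_not_linearIndependent {u v w : Fin (n + 1) → F}
    (hu : u ≠ 0) (hv : v ≠ 0) (hw : w ≠ 0) :
    Coll3 (Projectivization.mk F u hu) (Projectivization.mk F v hv) (Projectivization.mk F w hw) ↔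
      ¬ LinearIndependent F ![u, v, w] := by
  have hspan : (F ∙ u) ⊔ (F ∙ v) ⊔ (F ∙ w) = Submodule.span F (Set.range ![u, v, w]) := by
    simp only [Matrix.range_cons, Matrix.range_empty, Set.union_empty, Submodule.span_union,
      sup_assoc]
  rw [linearIndependent_iff_card_le_finrank_span, Fintype.card_fin, Set.finrank, ← hspan, not_le,
    Nat.lt_succ_iff, Coll3, Projectivization.submodule_mk, Projectivization.submodule_mk,
    Projectivization.submodule_mk]

theorem coll3_mk_iff_det_eq_zero {u v w : Fin 3 → F} (hu : u ≠ 0) (hv : v ≠ 0) (hw : w ≠ 0) :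
    Coll3 (n := 2) (Projectivization.mk F u hu) (Projectivization.mk F v hv)
      (Projectivization.mk F w hw) ↔ (Matrix.of ![u, v, w]).det = 0 := by
  rw [coll3_mk_iff_not_linearIndependent, not_iff_comm, ← Ne, ← isUnit_iff_ne_zero,
    ← Matrix.isUnit_iff_isUnit_det, ← Matrix.linearIndependent_rows_iff_isUnit]
  rfl

end Collinearity

section Cap

variable {F : Type*} [Field F] {n : ℕ} {K : Set (PGPoint F n)}

theorem finrank_quotient_submodule (P : PGPoint F n) :
    finrank F ((Fin (n + 1) → F) ⧸ P.submodule) = n := by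
  have h := P.submodule.finrank_quotient_add_finrank
  rw [P.finrank_submodule, finrank_fin_fun] at h
  exact Nat.succ_injective h

theorem IsCap.injOn_projFrom (hK : IsCap K) {P : PGPoint F n} (hP : P ∈ K) :
    Set.InjOn (projFrom P) (Subtype.val ⁻¹' K) := by
  intro Q hQ R hR hQR
  by_contra hne
  exact hK P hP Q hQ R hR Q.2.symm R.2.symm (Subtype.coe_ne_coe.2 hne)
    (coll3_of_sup_submodule_eq (sup_submodule_eq_of_projFrom_eq hQR))

theorem IsCap.ncard_le [Finite F] (hK : IsCap K) :
    K.ncard ≤ ∑ i ∈ Finset.range n, Nat.card F ^ i + 1 := by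
  obtain rfl | ⟨P, hP⟩ := K.eq_empty_or_nonempty
  · simp
  have : Finite ((Fin (n + 1) → F) ⧸ P.submodule) := Module.finite_of_finite F
  have himage : Subtype.val '' (Subtype.val ⁻¹' K : Set {Q // Q ≠ P}) = K \ {P} := by
    ext Q
    simp [and_comm]
  calc K.ncard = (K \ {P}).ncard + 1 := (Set.ncard_sdiff_singleton_add_one hP K.toFinite).symm
    _ = (projFrom P '' (Subtype.val ⁻¹' K)).ncard + 1 := by
      rw [(hK.injOn_projFrom hP).ncard_image, ← himage,
        Set.ncard_image_of_injective _ Subtype.val_injective]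
    _ ≤ Nat.card (ℙ F ((Fin (n + 1) → F) ⧸ P.submodule)) + 1 := by
      gcongr
      exact Set.ncard_le_card _
    _ = ∑ i ∈ Finset.range n, Nat.card F ^ i + 1 := by
      rw [Projectivization.card_of_finrank _ _ (finrank_quotient_submodule P)]

theorem IsCap.insert (hK : IsCap K) {P : PGPoint F n}
    (hP : ∀ Q ∈ K, ∀ R ∈ K, Q ≠ R → ¬ Coll3 P Q R) : IsCap (insert P K) := by
  rintro Q (rfl | hQ) R (rfl | hR) S (rfl | hS) hQR hQS hRS <;> try contradiction
  · exact hP R hR S hS hRS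
  · exact mt coll3_swap_left.1 (hP Q hQ S hS hQS)
  · exact mt coll3_rotate.1 (hP Q hQ R hR hQR)
  · exact hK Q hQ R hR S hS hQR hQS hRS

end Cap

section Veronese

/-- The quadratic Veronese map `(s, t) ↦ (s², st, t²)` on vectors, which parametrizes the conic
`x₁² = x₀x₂`. -/
def veroneseVec {R : Type*} [CommSemiring R] (v : Fin 2 → R) : Fin 3 → R :=
  ![v 0 ^ 2, v 0 * v 1, v 1 ^ 2]

theorem det_veroneseVec {R : Type*} [CommRing R] (u v w : Fin 2 → R) :
    (Matrix.of ![veroneseVec u, veroneseVec v, veroneseVec w]).det =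
      (Matrix.of ![u, v]).det * (Matrix.of ![u, w]).det * (Matrix.of ![v, w]).det := by
  simp only [veroneseVec, Matrix.det_fin_three, Matrix.det_fin_two, Matrix.of_apply,
    Matrix.cons_val]
  ring

theorem det_nucleus_veroneseVec {R : Type*} [CommRing R] [CharP R 2] (u v : Fin 2 → R) :
    (Matrix.of ![![0, 1, 0], veroneseVec u, veroneseVec v]).det =
      (Matrix.of ![u, v]).det ^ 2 := by
  simp only [veroneseVec, Matrix.det_fin_three, Matrix.det_fin_two, Matrix.of_apply,
    Matrix.cons_val, CharTwo.sub_eq_add, CharTwo.add_sq]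
  ring

variable {F : Type*} [Field F]

theorem veroneseVec_ne_zero {v : Fin 2 → F} (hv : v ≠ 0) : veroneseVec v ≠ 0 := by
  contrapose! hv
  have h0 : v 0 = 0 := pow_eq_zero_iff two_ne_zero |>.1 (congrFun hv 0)
  have h1 : v 1 = 0 := pow_eq_zero_iff two_ne_zero |>.1 (congrFun hv 2)
  exact funext (Fin.forall_fin_two.2 ⟨h0, h1⟩)

theorem det_eq_zero_of_smul_veroneseVec_eq {u v : Fin 2 → F} {c : F}
    (h : c • veroneseVec v = veroneseVec u) : (Matrix.of ![u, v]).det = 0 := by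
  have h0 : c * v 0 ^ 2 = u 0 ^ 2 := congrFun h 0
  have h1 : c * (v 0 * v 1) = u 0 * u 1 := congrFun h 1
  have h2 : c * v 1 ^ 2 = u 1 ^ 2 := congrFun h 2
  refine pow_eq_zero_iff two_ne_zero |>.1 ?_
  simp only [Matrix.det_fin_two, Matrix.of_apply, Matrix.cons_val]
  linear_combination -(v 1 ^ 2) * h0 + 2 * (v 0 * v 1) * h1 - v 0 ^ 2 * h2

theorem det_rep_eq_zero_iff {P Q : ℙ F (Fin 2 → F)} :
    (Matrix.of ![P.rep, Q.rep]).det = 0 ↔ P = Q := by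
  rw [← not_iff_not, ← Ne, ← Ne, ← Projectivization.linearIndependent_pair_iff_ne,
    ← isUnit_iff_ne_zero, ← Matrix.isUnit_iff_isUnit_det,
    ← Matrix.linearIndependent_rows_iff_isUnit]
  rfl

/-- The quadratic Veronese embedding of the projective line in the projective plane. The choice of
the representative is immaterial because the coordinates of `veroneseVec` are homogeneous. -/
noncomputable def veronese (P : ℙ F (Fin 2 → F)) : PGPoint F 2 :=
  Projectivization.mk F (veroneseVec P.rep) (veroneseVec_ne_zero P.rep_nonzero)

theorem veronese_injective : Function.Injective (veronese (F := F)) := by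
  intro P Q h
  obtain ⟨c, hc⟩ := (Projectivization.mk_eq_mk_iff' _ _ _ _ _).1 h
  exact det_rep_eq_zero_iff.1 (det_eq_zero_of_smul_veroneseVec_eq hc)

theorem isCap_range_veronese : IsCap (Set.range (veronese (F := F))) := by
  rintro _ ⟨P, rfl⟩ _ ⟨Q, rfl⟩ _ ⟨R, rfl⟩ hPQ hPR hQR
  rw [veronese, veronese, veronese, coll3_mk_iff_det_eq_zero, det_veroneseVec]
  simp only [mul_eq_zero, det_rep_eq_zero_iff, not_or]
  exact ⟨⟨ne_of_apply_ne _ hPQ, ne_of_apply_ne _ hPR⟩, ne_of_apply_ne _ hQR⟩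

end Veronese

section Hyperoval

variable (F : Type*) [Field F]

/-- The point `(0 : 1 : 0)`. In characteristic two it is the nucleus of the conic `x₁² = x₀x₂`,
the common point of all its tangents. -/
def nucleus : PGPoint F 2 :=
  Projectivization.mk F ![0, 1, 0] (by simp)

/-- The regular hyperoval: the conic `x₁² = x₀x₂` together with `nucleus F`. It is an arc only in
characteristic two. -/
def regularHyperoval : Set (PGPoint F 2) :=
  insert (nucleus F) (Set.range veronese)

theorem nucleus_notMem_range_veronese : nucleus F ∉ Set.range veronese := by
  rintro ⟨P, hP⟩
  obtain ⟨c, hc⟩ := (Projectivization.mk_eq_mk_iff' _ _ _ _ _).1 hP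
  have h0 : P.rep 0 = 0 := by simpa [veroneseVec] using (congrFun hc 0).symm
  have h1 : P.rep 1 = 0 := by simpa [veroneseVec] using (congrFun hc 2).symm
  exact P.rep_nonzero (funext (Fin.forall_fin_two.2 ⟨h0, h1⟩))

theorem isCap_regularHyperoval [CharP F 2] : IsCap (regularHyperoval F) := by
  refine isCap_range_veronese.insert ?_
  rintro _ ⟨P, rfl⟩ _ ⟨Q, rfl⟩ hPQ
  rw [nucleus, veronese, veronese, coll3_mk_iff_det_eq_zero, det_nucleus_veroneseVec,
    pow_eq_zero_iff two_ne_zero, det_rep_eq_zero_iff]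
  exact ne_of_apply_ne _ hPQ

theorem ncard_regularHyperoval [Finite F] : (regularHyperoval F).ncard = Nat.card F + 2 := by
  rw [regularHyperoval, Set.ncard_insert_of_notMem (nucleus_notMem_range_veronese F),
    Set.ncard_range_of_injective veronese_injective,
    Projectivization.card_of_finrank_two _ _ (finrank_fin_fun F)]

end Hyperoval

theorem stmt16 (F : Type*) [Field F] [Fintype F] (q : ℕ) (hcard : Fintype.card F = q)
    (hqeven : Even q) :
    (∀ K : Set (PGPoint F 2), IsCap K → K.ncard ≤ q + 2) ∧
    (∃ K : Set (PGPoint F 2), IsCap K ∧ K.ncard = q + 2) := by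
  have : CharP F 2 := ringChar.of_eq <|
    FiniteField.even_card_iff_char_two.2 (hcard ▸ Nat.even_iff.1 hqeven)
  rw [← hcard, ← Nat.card_eq_fintype_card]
  refine ⟨fun K hK => ?_, regularHyperoval F, isCap_regularHyperoval F, ncard_regularHyperoval F⟩
  calc K.ncard ≤ ∑ i ∈ Finset.range 2, Nat.card F ^ i + 1 := hK.ncard_le
    _ = Nat.card F + 2 := by rw [geom_sum_two]
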